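/- (Local convergence under misspecification: positivity of the radius.) Let g, G, W, θ̂, L, σ̲, R_G be as in the Gauss-Newton local convergence setting: g twice continuously differentiable with Jacobian G Lipschitz with constant L > 0, W with eigenvalues in [λ̲_W, λ̄_W], λ̲_W > 0, G(θ̂)ᵀWg(θ̂) = 0, and σ_min[G(θ)] ≥ σ̲ > 0 on ‖θ − θ̂‖ ≤ R_G. Suppose φ := ‖g(θ̂)‖_W satisfies 0 ≤ φ < σ̲²·λ̲_W/(L·√λ̄_W). Then for every γ ∈ (0,1) there exists γ̃ ∈ (0,γ) such that R̃ := ((γ−γ̃)/γ)·σ̲·√(λ̲_W/λ̄_W)/L − φ/(σ̲·√λ̲_W) > 0, and for any θ_0 with ‖θ_0 − θ̂‖ ≤ min(R̃, R_G), the Gauss-Newton iterates θ_{k+1} = θ_k − γ[G(θ_k)ᵀWG(θ_k)]⁻¹G(θ_k)ᵀWg(θ_k) satisfy ‖θ_{k+1} − θ̂‖ ≤ (1 − γ̃)^{k+1}·‖θ_0 − θ̂‖ for all k ≥ 0. -/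

import Mathlib

open Matrix Set MeasureTheory
open scoped BigOperators

noncomputable section

/-- Euclidean norm of a vector in `Fin n → ℝ`. -/
def enorm' {n : ℕ} (v : Fin n → ℝ) : ℝ := Real.sqrt (∑ i, v i ^ 2)

/-- Smallest singular value of a matrix. -/
def sigMin {m p : ℕ} (A : Matrix (Fin m) (Fin p) ℝ) : ℝ :=
  sInf {c : ℝ | ∃ v : Fin p → ℝ, enorm' v = 1 ∧ c = enorm' (A *ᵥ v)}

/-- Largest singular value of a matrix (operator norm). -/
def sigMax {m p : ℕ} (A : Matrix (Fin m) (Fin p) ℝ) : ℝ :=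
  sSup {c : ℝ | ∃ v : Fin p → ℝ, enorm' v = 1 ∧ c = enorm' (A *ᵥ v)}

/-- Smallest eigenvalue of a (symmetric) square matrix, via the Rayleigh quotient. -/
def lamMin {n : ℕ} (A : Matrix (Fin n) (Fin n) ℝ) : ℝ :=
  sInf {c : ℝ | ∃ v : Fin n → ℝ, enorm' v = 1 ∧ c = v ⬝ᵥ (A *ᵥ v)}

/-- Largest eigenvalue of a (symmetric) square matrix, via the Rayleigh quotient. -/
def lamMax {n : ℕ} (A : Matrix (Fin n) (Fin n) ℝ) : ℝ :=
  sSup {c : ℝ | ∃ v : Fin n → ℝ, enorm' v = 1 ∧ c = v ⬝ᵥ (A *ᵥ v)}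

/-- Weighted norm `‖v‖_W = √(vᵀ W v)`. -/
def wnorm {m : ℕ} (W : Matrix (Fin m) (Fin m) ℝ) (v : Fin m → ℝ) : ℝ :=
  Real.sqrt (v ⬝ᵥ (W *ᵥ v))

/-- A matrix viewed as a continuous linear map `ℝ^p → ℝ^m`. -/
def toCLM {m p : ℕ} (A : Matrix (Fin m) (Fin p) ℝ) : (Fin p → ℝ) →L[ℝ] (Fin m → ℝ) :=
  LinearMap.toContinuousLinearMap A.mulVecLin

lemma en_eq {n : ℕ} (v : Fin n → ℝ) : enorm' v = ‖WithLp.toLp 2 v‖ := by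
  simp [enorm', EuclideanSpace.norm_eq]

lemma en_nonneg {n : ℕ} (v : Fin n → ℝ) : 0 ≤ enorm' v := Real.sqrt_nonneg _

lemma en_sq {n : ℕ} (v : Fin n → ℝ) : enorm' v ^ 2 = v ⬝ᵥ v := by
  rw [enorm', Real.sq_sqrt (Finset.sum_nonneg fun i _ => sq_nonneg _)]
  simp [dotProduct, sq]

lemma en_smul {n : ℕ} (c : ℝ) (v : Fin n → ℝ) : enorm' (c • v) = |c| * enorm' v := by
  rw [en_eq, en_eq, WithLp.toLp_smul, norm_smul, Real.norm_eq_abs]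

lemma en_add {n : ℕ} (u v : Fin n → ℝ) : enorm' (u + v) ≤ enorm' u + enorm' v := by
  rw [en_eq, en_eq, en_eq, WithLp.toLp_add]; exact norm_add_le _ _

lemma en_zero {n : ℕ} : enorm' (0 : Fin n → ℝ) = 0 := by simp [enorm']

lemma en_eq_zero {n : ℕ} {v : Fin n → ℝ} (h : enorm' v = 0) : v = 0 := by
  have := en_sq v
  rw [h] at this
  exact dotProduct_self_eq_zero.1 (by linarith)

lemma en_cs {n : ℕ} (u v : Fin n → ℝ) : u ⬝ᵥ v ≤ enorm' u * enorm' v := by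
  have h := Real.sum_mul_le_sqrt_mul_sqrt Finset.univ u v
  exact h

lemma en_normalize {n : ℕ} {v : Fin n → ℝ} (h : enorm' v ≠ 0) :
    enorm' ((enorm' v)⁻¹ • v) = 1 := by
  rw [en_smul, abs_of_nonneg (inv_nonneg.2 (en_nonneg v)), inv_mul_cancel₀ h]

lemma en_bdd {m p : ℕ} (A : Matrix (Fin m) (Fin p) ℝ) :
    ∃ C, 0 ≤ C ∧ ∀ v, enorm' (A *ᵥ v) ≤ C * enorm' v := by
  refine ⟨‖(Matrix.toEuclideanLin A).toContinuousLinearMap‖, norm_nonneg _, fun v => ?_⟩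
  have := (Matrix.toEuclideanLin A).toContinuousLinearMap.le_opNorm (WithLp.toLp 2 v)
  rw [en_eq, en_eq]
  simpa using this

lemma sigMax_bound {m p : ℕ} (A : Matrix (Fin m) (Fin p) ℝ) (v : Fin p → ℝ) :
    enorm' (A *ᵥ v) ≤ sigMax A * enorm' v := by
  by_cases h : enorm' v = 0
  · rw [en_eq_zero h]; simp [en_zero]
  have hp : 0 < enorm' v := lt_of_le_of_ne (en_nonneg v) (Ne.symm h)
  obtain ⟨C, hC, hb⟩ := en_bdd A
  have : enorm' (A *ᵥ ((enorm' v)⁻¹ • v)) ≤ sigMax A := by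
    refine le_csSup ⟨C, ?_⟩ ⟨_, en_normalize h, rfl⟩
    rintro c ⟨w, hw, rfl⟩
    simpa [hw] using hb w
  rw [mulVec_smul, en_smul, abs_of_pos (inv_pos.2 hp), inv_mul_le_iff₀ hp] at this
  linarith

lemma sigMin_bound {m p : ℕ} (A : Matrix (Fin m) (Fin p) ℝ) (v : Fin p → ℝ) :
    sigMin A * enorm' v ≤ enorm' (A *ᵥ v) := by
  by_cases h : enorm' v = 0
  · rw [h]; simp [en_nonneg]
  have hp : 0 < enorm' v := lt_of_le_of_ne (en_nonneg v) (Ne.symm h)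
  have : sigMin A ≤ enorm' (A *ᵥ ((enorm' v)⁻¹ • v)) := by
    refine csInf_le ⟨0, ?_⟩ ⟨_, en_normalize h, rfl⟩
    rintro c ⟨w, hw, rfl⟩
    exact en_nonneg _
  rw [mulVec_smul, en_smul, abs_of_pos (inv_pos.2 hp), le_inv_mul_iff₀ hp] at this
  linarith

lemma quad_bdd {n : ℕ} (A : Matrix (Fin n) (Fin n) ℝ) :
    BddAbove {c : ℝ | ∃ v : Fin n → ℝ, enorm' v = 1 ∧ c = v ⬝ᵥ (A *ᵥ v)} := by
  obtain ⟨C, hC, hb⟩ := en_bdd A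
  refine ⟨C, ?_⟩
  rintro c ⟨w, hw, rfl⟩
  have := en_cs w (A *ᵥ w)
  have := hb w
  simp [hw] at *
  linarith

lemma quad_normalize {n : ℕ} (A : Matrix (Fin n) (Fin n) ℝ) (c : ℝ) (v : Fin n → ℝ) :
    (c • v) ⬝ᵥ (A *ᵥ (c • v)) = c ^ 2 * (v ⬝ᵥ (A *ᵥ v)) := by
  rw [mulVec_smul, smul_dotProduct, dotProduct_smul]; simp; ring

lemma lamMax_bound {n : ℕ} (A : Matrix (Fin n) (Fin n) ℝ) (v : Fin n → ℝ) :
    v ⬝ᵥ (A *ᵥ v) ≤ lamMax A * enorm' v ^ 2 := by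
  by_cases h : enorm' v = 0
  · rw [en_eq_zero h]; simp [en_zero]
  have hp : 0 < enorm' v := lt_of_le_of_ne (en_nonneg v) (Ne.symm h)
  have := le_csSup (quad_bdd A) ⟨_, en_normalize h, rfl⟩
  rw [quad_normalize, inv_pow, inv_mul_le_iff₀ (by positivity)] at this
  rw [mul_comm]; exact this

lemma W_nonneg {n : ℕ} {W : Matrix (Fin n) (Fin n) ℝ} (hW : W.PosDef) (v : Fin n → ℝ) :
    0 ≤ v ⬝ᵥ (W *ᵥ v) := by
  simpa using hW.posSemidef.dotProduct_mulVec_nonneg v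

lemma lamMin_bound {n : ℕ} {W : Matrix (Fin n) (Fin n) ℝ} (hW : W.PosDef) (v : Fin n → ℝ) :
    lamMin W * enorm' v ^ 2 ≤ v ⬝ᵥ (W *ᵥ v) := by
  by_cases h : enorm' v = 0
  · rw [en_eq_zero h]; simp [en_zero]
  have hp : 0 < enorm' v := lt_of_le_of_ne (en_nonneg v) (Ne.symm h)
  have hb : BddBelow {c : ℝ | ∃ v : Fin n → ℝ, enorm' v = 1 ∧ c = v ⬝ᵥ (W *ᵥ v)} := by
    refine ⟨0, ?_⟩
    rintro c ⟨w, hw, rfl⟩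
    exact W_nonneg hW w
  have := csInf_le hb ⟨_, en_normalize h, rfl⟩
  rw [quad_normalize, inv_pow, le_inv_mul_iff₀ (by positivity)] at this
  rw [mul_comm]; exact this

lemma W_symm {n : ℕ} {W : Matrix (Fin n) (Fin n) ℝ} (hW : W.PosDef) (u v : Fin n → ℝ) :
    u ⬝ᵥ (W *ᵥ v) = v ⬝ᵥ (W *ᵥ u) := by
  have hT : Wᵀ = W := by simpa using hW.isHermitian.eq
  rw [dotProduct_mulVec, ← mulVec_transpose, hT, dotProduct_comm]

lemma w_sq {n : ℕ} {W : Matrix (Fin n) (Fin n) ℝ} (hW : W.PosDef) (v : Fin n → ℝ) :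
    wnorm W v ^ 2 = v ⬝ᵥ (W *ᵥ v) := Real.sq_sqrt (W_nonneg hW v)

lemma w_cs {n : ℕ} {W : Matrix (Fin n) (Fin n) ℝ} (hW : W.PosDef) (u v : Fin n → ℝ) :
    u ⬝ᵥ (W *ᵥ v) ≤ wnorm W u * wnorm W v := by
  have h : ∀ t : ℝ, 0 ≤ (u ⬝ᵥ (W *ᵥ u)) * (t * t) + (2 * (u ⬝ᵥ (W *ᵥ v))) * t
      + v ⬝ᵥ (W *ᵥ v) := by
    intro t
    have h1 := W_nonneg hW (t • u + v)
    have h2 := W_symm hW u v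
    simp only [mulVec_add, mulVec_smul, dotProduct_add, add_dotProduct, smul_dotProduct,
      dotProduct_smul, smul_eq_mul] at h1
    rw [← h2] at h1
    linarith
  have hd := discrim_le_zero h
  unfold discrim at hd
  rw [← w_sq hW u, ← w_sq hW v] at hd
  have : 0 ≤ wnorm W u * wnorm W v := mul_nonneg (Real.sqrt_nonneg _) (Real.sqrt_nonneg _)
  apply le_of_sq_le_sq _ this
  nlinarith

lemma w_le {n : ℕ} {W : Matrix (Fin n) (Fin n) ℝ} {Whi : ℝ}
    (h : lamMax W ≤ Whi) (hp : 0 ≤ Whi) (v : Fin n → ℝ) :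
    wnorm W v ≤ √Whi * enorm' v := by
  rw [wnorm, ← Real.sqrt_sq (en_nonneg v), ← Real.sqrt_mul hp]
  apply Real.sqrt_le_sqrt
  exact (lamMax_bound W v).trans (by gcongr)

lemma w_ge {n : ℕ} {W : Matrix (Fin n) (Fin n) ℝ} (hW : W.PosDef) {Wlo : ℝ}
    (h : Wlo ≤ lamMin W) (hp : 0 ≤ Wlo) (v : Fin n → ℝ) :
    √Wlo * enorm' v ≤ wnorm W v := by
  rw [wnorm, ← Real.sqrt_sq (en_nonneg v), ← Real.sqrt_mul hp]
  apply Real.sqrt_le_sqrt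
  exact le_trans (by gcongr) (lamMin_bound hW v)

lemma en_W_le {n : ℕ} {W : Matrix (Fin n) (Fin n) ℝ} (hW : W.PosDef) {Whi : ℝ}
    (h : lamMax W ≤ Whi) (hp : 0 ≤ Whi) (u : Fin n → ℝ) :
    enorm' (W *ᵥ u) ≤ √Whi * wnorm W u := by
  have hu : 0 ≤ wnorm W u := Real.sqrt_nonneg _
  by_cases h0 : enorm' (W *ᵥ u) = 0
  · rw [h0]; positivity
  have hp' : 0 < enorm' (W *ᵥ u) := lt_of_le_of_ne (en_nonneg _) (Ne.symm h0)
  have h1 := w_cs hW (W *ᵥ u) u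
  rw [← en_sq] at h1
  have h2 := mul_le_mul_of_nonneg_right (w_le h hp (W *ᵥ u)) hu
  refine le_of_mul_le_mul_left ?_ hp'
  nlinarith

/-- mean value estimate -/
lemma mvt_bound {m p : ℕ} (g : (Fin p → ℝ) → (Fin m → ℝ))
    (G : (Fin p → ℝ) → Matrix (Fin m) (Fin p) ℝ) (L : ℝ) (hL : 0 < L)
    (hG : ∀ θ, HasFDerivAt g (toCLM (G θ)) θ)
    (hLip : ∀ θ₁ θ₂, sigMax (G θ₁ - G θ₂) ≤ L * enorm' (θ₁ - θ₂))
    (a b : Fin p → ℝ) :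
    enorm' (g b - g a - G b *ᵥ (b - a)) ≤ L * enorm' (b - a) ^ 2 := by
  set u := g b - g a - G b *ᵥ (b - a) with hu
  set e := b - a with he
  have hd : ∀ t : ℝ, HasDerivAt (fun t : ℝ => u ⬝ᵥ (g (a + t • e) - t • (G b *ᵥ e)))
      (u ⬝ᵥ ((G (a + t • e) - G b) *ᵥ e)) t := by
    intro t
    have h1 : HasDerivAt (fun t : ℝ => a + t • e) e t := by
      simpa using ((hasDerivAt_id t).smul_const e).const_add a
    have h2 := (hG (a + t • e)).comp_hasDerivAt t h1
    have h3 : HasDerivAt (fun t : ℝ => t • (G b *ᵥ e)) (G b *ᵥ e) t := by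
      simpa using (hasDerivAt_id t).smul_const (G b *ᵥ e)
    have h4 := hasDerivAt_pi.1 (h2.sub h3)
    have h5 := HasDerivAt.fun_sum (u := Finset.univ) fun i _ => (h4 i).const_mul (u i)
    simpa [dotProduct, sub_mulVec, toCLM] using h5
  obtain ⟨c, hc, hc'⟩ := exists_hasDerivAt_eq_slope _ _ (zero_lt_one (α := ℝ))
    (fun t _ => (hd t).continuousAt.continuousWithinAt) (fun t _ => hd t)
  have hb : a + e = b := by simp [he]
  have hsl : u ⬝ᵥ ((G (a + c • e) - G b) *ᵥ e) = enorm' u ^ 2 := by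
    rw [hc', en_sq]
    simp only [one_smul, zero_smul, add_zero, sub_zero, div_one, hb]
    rw [← dotProduct_sub]
    congr 1
    rw [hu]; abel
  have hx : enorm' (a + c • e - b) ≤ enorm' e := by
    have : a + c • e - b = (c - 1) • e := by rw [sub_smul, he]; simp; abel
    rw [this, en_smul]
    have : |c - 1| ≤ 1 := by rw [abs_le]; constructor <;> linarith [hc.1, hc.2]
    exact mul_le_of_le_one_left (en_nonneg _) this
  have h1 := en_cs u ((G (a + c • e) - G b) *ᵥ e)
  have h2 := sigMax_bound (G (a + c • e) - G b) e
  have h3 : enorm' ((G (a + c • e) - G b) *ᵥ e) ≤ L * enorm' e ^ 2 := by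
    have : sigMax (G (a + c • e) - G b) ≤ L * enorm' e :=
      (hLip _ _).trans (by gcongr)
    have := mul_le_mul_of_nonneg_right this (en_nonneg e)
    nlinarith
  by_cases h0 : enorm' u = 0
  · rw [h0]; have := en_nonneg e; positivity
  have hp' : 0 < enorm' u := lt_of_le_of_ne (en_nonneg _) (Ne.symm h0)
  refine le_of_mul_le_mul_left ?_ hp'
  have := mul_le_mul_of_nonneg_left h3 hp'.le
  nlinarith

lemma H_quad {m p : ℕ} (A : Matrix (Fin m) (Fin p) ℝ) (W : Matrix (Fin m) (Fin m) ℝ)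
    (x y : Fin p → ℝ) : x ⬝ᵥ ((Aᵀ * W * A) *ᵥ y) = (A *ᵥ x) ⬝ᵥ (W *ᵥ (A *ᵥ y)) := by
  rw [← mulVec_mulVec, ← mulVec_mulVec, dotProduct_mulVec, vecMul_transpose]

lemma tr_dot {m p : ℕ} (A : Matrix (Fin m) (Fin p) ℝ) (x : Fin p → ℝ) (z : Fin m → ℝ) :
    x ⬝ᵥ (Aᵀ *ᵥ z) = (A *ᵥ x) ⬝ᵥ z := by
  rw [dotProduct_mulVec, vecMul_transpose]

lemma step_bound {m p : ℕ} (g : (Fin p → ℝ) → (Fin m → ℝ))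
    (G : (Fin p → ℝ) → Matrix (Fin m) (Fin p) ℝ) (W : Matrix (Fin m) (Fin m) ℝ)
    (θhat : Fin p → ℝ) (L σlo Wlo Whi γ : ℝ)
    (hG : ∀ θ, HasFDerivAt g (toCLM (G θ)) θ) (hW : W.PosDef)
    (hWlo : 0 < Wlo) (hWmin : Wlo ≤ lamMin W) (hWmax : lamMax W ≤ Whi) (hWhi : 0 < Whi)
    (hfoc : (G θhat)ᵀ *ᵥ (W *ᵥ g θhat) = 0) (hL : 0 < L)
    (hLip : ∀ θ₁ θ₂, sigMax (G θ₁ - G θ₂) ≤ L * enorm' (θ₁ - θ₂))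
    (hσpos : 0 < σlo) (hγ : γ ∈ Set.Ioo (0 : ℝ) 1) (θ : Fin p → ℝ) (hσ : σlo ≤ sigMin (G θ)) :
    enorm' (θ - γ • (((G θ)ᵀ * W * G θ)⁻¹ *ᵥ ((G θ)ᵀ *ᵥ (W *ᵥ g θ))) - θhat) ≤
      (1 - γ) * enorm' (θ - θhat) + γ * (L * √Whi / (σlo * √Wlo) * enorm' (θ - θhat) ^ 2
        + L * √Whi * wnorm W (g θhat) / (σlo ^ 2 * Wlo) * enorm' (θ - θhat)) := by
  set A := G θ with hA
  set H := Aᵀ * W * A with hH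
  set e := θ - θhat with he
  set s := √Wlo with hs
  have hs0 : 0 < s := Real.sqrt_pos.2 hWlo
  have hss : s ^ 2 = Wlo := Real.sq_sqrt hWlo.le
  have hlow : ∀ x, σlo * s * enorm' x ≤ wnorm W (A *ᵥ x) := by
    intro x
    have h1 := w_ge hW hWmin hWlo.le (A *ᵥ x)
    have h2 := sigMin_bound A x
    have h3 := mul_le_mul_of_nonneg_right hσ (en_nonneg x)
    have h4 := mul_le_mul_of_nonneg_left (h3.trans h2) hs0.le
    linarith
  have hdet : IsUnit H.det := by
    rw [isUnit_iff_ne_zero]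
    intro hd
    obtain ⟨v, hv, hv0⟩ := Matrix.exists_mulVec_eq_zero_iff.2 hd
    have h1 := H_quad A W v v
    rw [← hH, hv0, dotProduct_zero, ← w_sq hW] at h1
    have h2 := hlow v
    have h3 : wnorm W (A *ᵥ v) = 0 := by simpa using h1.symm
    rw [h3] at h2
    have h4 : enorm' v ≤ 0 := by
      by_contra h; push Not at h
      have : 0 < σlo * s * enorm' v := by positivity
      linarith
    exact hv (en_eq_zero (le_antisymm h4 (en_nonneg v)))
  have hinv : ∀ y, H *ᵥ (H⁻¹ *ᵥ y) = y := by
    intro y; rw [mulVec_mulVec, Matrix.mul_nonsing_inv _ hdet, one_mulVec]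
  have hinv' : ∀ y, H⁻¹ *ᵥ (H *ᵥ y) = y := by
    intro y; rw [mulVec_mulVec, Matrix.nonsing_inv_mul _ hdet, one_mulVec]
  set r := g θ - g θhat - A *ᵥ e with hr
  set x1 := H⁻¹ *ᵥ (Aᵀ *ᵥ (W *ᵥ r)) with hx1
  set x2 := H⁻¹ *ᵥ ((A - G θhat)ᵀ *ᵥ (W *ᵥ g θhat)) with hx2
  have hdec : θ - γ • (H⁻¹ *ᵥ (Aᵀ *ᵥ (W *ᵥ g θ))) - θhat
      = (1 - γ) • e + ((-γ) • x1 + (-γ) • x2) := by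
    have h1 : g θ = r + g θhat + A *ᵥ e := by rw [hr]; abel
    have h2 : Aᵀ *ᵥ (W *ᵥ (A *ᵥ e)) = H *ᵥ e := by simp [hH, mulVec_mulVec, Matrix.mul_assoc]
    have h3 : x2 = H⁻¹ *ᵥ (Aᵀ *ᵥ (W *ᵥ g θhat)) := by
      rw [hx2, transpose_sub, sub_mulVec, hfoc, sub_zero]
    rw [h1, mulVec_add, mulVec_add, mulVec_add, mulVec_add, mulVec_add, mulVec_add, h2, hinv',
      ← h3, ← hx1]
    have : θ = e + θhat := by rw [he]; abel
    rw [this]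
    module
  have hb1 : σlo * s * enorm' x1 ≤ √Whi * (L * enorm' e ^ 2) := by
    have h1 := H_quad A W x1 x1
    rw [← hH, hx1, hinv, ← hx1, tr_dot, ← w_sq hW] at h1
    have h2 := w_cs hW (A *ᵥ x1) r
    have h3 : wnorm W (A *ᵥ x1) ≤ wnorm W r := by
      by_contra h; push Not at h
      have : 0 ≤ wnorm W r := Real.sqrt_nonneg _
      nlinarith
    have h4 := w_le hWmax hWhi.le r
    have h5 : enorm' r ≤ L * enorm' e ^ 2 := mvt_bound g G L hL hG hLip θhat θ
    have h6 := mul_le_mul_of_nonneg_left h5 (Real.sqrt_nonneg Whi)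
    linarith [hlow x1]
  have hb2 : σlo ^ 2 * Wlo * enorm' x2 ≤ L * enorm' e * (√Whi * wnorm W (g θhat)) := by
    have h1 := H_quad A W x2 x2
    rw [← hH, hx2, hinv, ← hx2, tr_dot, ← w_sq hW] at h1
    have h2 := en_cs ((A - G θhat) *ᵥ x2) (W *ᵥ g θhat)
    have h3 := sigMax_bound (A - G θhat) x2
    have h4 := mul_le_mul_of_nonneg_right (hLip θ θhat) (en_nonneg x2)
    have h5 := en_W_le hW hWmax hWhi.le (g θhat)
    have h6 : enorm' ((A - G θhat) *ᵥ x2) * enorm' (W *ᵥ g θhat) ≤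
        (L * enorm' e * enorm' x2) * (√Whi * wnorm W (g θhat)) :=
      mul_le_mul (h3.trans h4) h5 (en_nonneg _)
        (mul_nonneg (mul_nonneg hL.le (en_nonneg _)) (en_nonneg _))
    have h7 : (σlo * s * enorm' x2) ^ 2 ≤ wnorm W (A *ᵥ x2) ^ 2 :=
      pow_le_pow_left₀ (mul_nonneg (by positivity) (en_nonneg _)) (hlow x2) 2
    have hw : 0 ≤ wnorm W (g θhat) := Real.sqrt_nonneg _
    by_cases h0 : enorm' x2 = 0
    · rw [h0]; have := en_nonneg e; simp; positivity
    have hp' : 0 < enorm' x2 := lt_of_le_of_ne (en_nonneg _) (Ne.symm h0)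
    refine le_of_mul_le_mul_left ?_ hp'
    rw [mul_pow, mul_pow, hss] at h7
    nlinarith
  have hc1 : enorm' x1 ≤ L * √Whi / (σlo * s) * enorm' e ^ 2 := by
    rw [div_mul_eq_mul_div, le_div_iff₀ (by positivity)]; linarith
  have hc2 : enorm' x2 ≤ L * √Whi * wnorm W (g θhat) / (σlo ^ 2 * Wlo) * enorm' e := by
    rw [div_mul_eq_mul_div, le_div_iff₀ (by positivity)]; linarith
  rw [hdec]
  have t1 := en_add ((1 - γ) • e) ((-γ) • x1 + (-γ) • x2)
  have t2 := en_add ((-γ) • x1) ((-γ) • x2)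
  rw [en_smul, abs_of_pos (by linarith [hγ.2])] at t1
  rw [en_smul, en_smul, abs_neg, abs_of_pos hγ.1] at t2
  have := mul_le_mul_of_nonneg_left (add_le_add hc1 hc2) hγ.1.le
  linarith

/-- Local convergence of Gauss-Newton under moderate misspecification
(Proposition 3, deterministic core). -/
theorem gauss_newton_local_convergence_misspecified
    {p m : ℕ}
    (g : (Fin p → ℝ) → (Fin m → ℝ))
    (G : (Fin p → ℝ) → Matrix (Fin m) (Fin p) ℝ)
    (W : Matrix (Fin m) (Fin m) ℝ)
    (θhat : Fin p → ℝ)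
    (L σlo RG Wlo Whi φ : ℝ)
    (hg : ContDiff ℝ 2 g)
    (hG : ∀ θ, HasFDerivAt g (toCLM (G θ)) θ)
    (hW : W.PosDef)
    (hWlo : 0 < Wlo) (hWmin : Wlo ≤ lamMin W) (hWmax : lamMax W ≤ Whi)
    (hfoc : (G θhat)ᵀ *ᵥ (W *ᵥ g θhat) = 0)
    (hL : 0 < L)
    (hLip : ∀ θ₁ θ₂, sigMax (G θ₁ - G θ₂) ≤ L * enorm' (θ₁ - θ₂))
    (hσpos : 0 < σlo)
    (hσ : ∀ θ, enorm' (θ - θhat) ≤ RG → σlo ≤ sigMin (G θ))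
    (hφ : φ = wnorm W (g θhat))
    (hmis : φ < σlo ^ 2 * Wlo / (L * Real.sqrt Whi)) :
    ∀ γ ∈ Set.Ioo (0 : ℝ) 1, ∃ γt, 0 < γt ∧ γt < γ ∧
      0 < ((γ - γt) / γ) * σlo * Real.sqrt (Wlo / Whi) / L - φ / (σlo * Real.sqrt Wlo) ∧
      ∀ θseq : ℕ → (Fin p → ℝ),
        enorm' (θseq 0 - θhat)
          ≤ min (((γ - γt) / γ) * σlo * Real.sqrt (Wlo / Whi) / L - φ / (σlo * Real.sqrt Wlo)) RG →
        (∀ k, θseq (k + 1) = θseq k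
          - γ • (((G (θseq k))ᵀ * W * G (θseq k))⁻¹ *ᵥ ((G (θseq k))ᵀ *ᵥ (W *ᵥ g (θseq k))))) →
        ∀ k, enorm' (θseq (k + 1) - θhat) ≤ (1 - γt) * enorm' (θseq k - θhat)
          ∧ enorm' (θseq (k + 1) - θhat)
            ≤ (1 - γt) ^ (k + 1) * enorm' (θseq 0 - θhat) := by
  intro γ hγ
  have hγ0 := hγ.1
  have hγ1 := hγ.2
  have hm : 0 < m := by
    rcases Nat.eq_zero_or_pos m with h | h
    · subst h
      exfalso
      have : lamMin W = 0 := by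
        have : {c : ℝ | ∃ v : Fin 0 → ℝ, enorm' v = 1 ∧ c = v ⬝ᵥ (W *ᵥ v)} = ∅ := by
          ext c; simp [enorm']
        rw [lamMin, this, Real.sInf_empty]
      linarith
    · exact h
  have hWhi : 0 < Whi := by
    have h1 := lamMax_bound W (Pi.single ⟨0, hm⟩ 1)
    have h2 := lamMin_bound hW (Pi.single ⟨0, hm⟩ 1)
    have h3 : enorm' (Pi.single (⟨0, hm⟩ : Fin m) (1 : ℝ)) ^ 2 = 1 := by
      rw [en_sq]; simp
    rw [h3] at h1 h2
    linarith
  have hφ0 : 0 ≤ φ := by rw [hφ]; exact Real.sqrt_nonneg _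
  set s := √Wlo with hs
  set S := √Whi with hS
  have hs0 : 0 < s := Real.sqrt_pos.2 hWlo
  have hS0 : 0 < S := Real.sqrt_pos.2 hWhi
  have hss : s ^ 2 = Wlo := Real.sq_sqrt hWlo.le
  have hdiv : √(Wlo / Whi) = s / S := Real.sqrt_div hWlo.le _
  set r := L * S * φ / (σlo ^ 2 * Wlo) with hr
  have hr0 : 0 ≤ r := by positivity
  have hr1 : r < 1 := by
    rw [lt_div_iff₀ (by positivity)] at hmis
    rw [hr, div_lt_one (by positivity)]; linarith
  have hrad : ∀ q : ℝ, q * σlo * √(Wlo / Whi) / L - φ / (σlo * s)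
      = (q - r) * (σlo * s / (L * S)) := by
    intro q
    rw [hdiv, hr, ← hss]
    field_simp
  refine ⟨γ * (1 - r) / 2, by have : 0 < 1 - r := by linarith
                              positivity, by nlinarith, ?_, ?_⟩
  · rw [hrad]
    have : (γ - γ * (1 - r) / 2) / γ = (1 + r) / 2 := by field_simp; ring
    rw [this]
    exact mul_pos (by linarith) (by positivity)
  intro θseq h0 hstep
  rw [hrad] at h0
  set γt := γ * (1 - r) / 2 with hγt
  have hγt0 : 0 < γt := by
    have : 0 < 1 - r := by linarith
    positivity
  have hγt1 : γt < 1 := by nlinarith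
  have key : ∀ k, enorm' (θseq k - θhat) ≤ enorm' (θseq 0 - θhat) →
      enorm' (θseq (k + 1) - θhat) ≤ (1 - γt) * enorm' (θseq k - θhat) := by
    intro k hk
    have hk1 := (hk.trans h0).trans (min_le_left _ _)
    have hk2 := (hk.trans h0).trans (min_le_right _ _)
    have hb := step_bound g G W θhat L σlo Wlo Whi γ hG hW hWlo hWmin hWmax hWhi hfoc hL hLip
      hσpos hγ (θseq k) (hσ _ hk2)
    rw [hstep k]
    refine hb.trans ?_
    rw [← hφ, ← hs, ← hS, ← hr]
    set E := enorm' (θseq k - θhat) with hE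
    have hE0 : 0 ≤ E := en_nonneg _
    have h1 : L * S / (σlo * s) * E ≤ (γ - γt) / γ - r := by
      have := mul_le_mul_of_nonneg_left hk1 (show 0 ≤ L * S / (σlo * s) by positivity)
      refine this.trans (le_of_eq ?_)
      field_simp
    have h2 : γ * (L * S / (σlo * s) * E + r) ≤ γ - γt := by
      have := mul_le_mul_of_nonneg_left (show L * S / (σlo * s) * E + r ≤ (γ - γt) / γ by linarith)
        hγ0.le
      rwa [mul_div_cancel₀ _ hγ0.ne'] at this
    have h3 := mul_le_mul_of_nonneg_right h2 hE0
    nlinarith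
  have hpow : ∀ k, enorm' (θseq k - θhat) ≤ (1 - γt) ^ k * enorm' (θseq 0 - θhat) := by
    intro k
    induction k with
    | zero => simp
    | succ k ih =>
      have h1 : enorm' (θseq k - θhat) ≤ enorm' (θseq 0 - θhat) :=
        ih.trans (mul_le_of_le_one_left (en_nonneg _)
          (pow_le_one₀ (by linarith) (by linarith)))
      have h2 := mul_le_mul_of_nonneg_left ih (show 0 ≤ 1 - γt by linarith)
      refine (key k h1).trans (h2.trans (le_of_eq ?_))
      ring
  intro k
  refine ⟨key k ?_, hpow (k + 1)⟩
  exact (hpow k).trans (mul_le_of_le_one_left (en_nonneg _)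
          (pow_le_one₀ (by linarith) (by linarith)))
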